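/- (Operator Lipschitzness.) Let A, B ∈ V_{(0,b]}(X) with constants M_A, M_B. Then ‖f(A) − f(B)‖ ≤ M_A · M_B · f′(−0) · ‖A − B‖, where f′(−0) := ∫₀^b (1/t) dτ(t). -/

import Mathlib

open MeasureTheory Set Filter

/-- A bounded operator `A` belongs to `V_{(0,b]}(X)` with constant `M` if every `t ∈ (0,b]`
lies in the resolvent set of `A` and `‖R(t,A)‖ ≤ M/t`. -/
def MemV {X : Type*} [NormedAddCommGroup X] [NormedSpace ℂ X]
    (b M : ℝ) (A : X →L[ℂ] X) : Prop :=
  ∀ t ∈ Ioc (0 : ℝ) b, (t : ℂ) ∈ resolventSet ℂ A ∧ ‖resolvent A (t : ℂ)‖ ≤ M / t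

/-- For `f ∈ ZR(0,b]` with representing measure `τ`, the operator
`f(A) = ∫₀^b A·R(t,A) dτ(t)` (a Bochner integral in operator norm). -/
noncomputable def fOp {X : Type*} [NormedAddCommGroup X] [NormedSpace ℂ X] [CompleteSpace X]
    (τ : Measure ℝ) (b : ℝ) (A : X →L[ℂ] X) : X →L[ℂ] X :=
  ∫ t in Ioc (0 : ℝ) b, A * resolvent A (t : ℂ) ∂τ

/-!
The additive constant in `a R(z,a) = z R(z,a) - 1` cancels, so by the second resolvent identity
`a R(z,a) - b R(z,b) = z R(z,a) (a - b) R(z,b)`. With `‖R(t,a)‖ ≤ M_a / t` and `‖R(t,b)‖ ≤ M_b / t`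
the right-hand side has norm at most `M_a M_b ‖a - b‖ / t`, which is then integrated against `τ`.
-/

section Algebra

variable {𝕜 R : Type*} [CommRing 𝕜] [Ring R] [Algebra 𝕜 R] {a b : R} {z : 𝕜}

theorem mul_resolvent_eq_smul_sub_one (ha : z ∈ resolventSet 𝕜 a) :
    a * resolvent a z = z • resolvent a z - 1 := by
  have cancel : (algebraMap 𝕜 R z - a) * resolvent a z = 1 := Ring.mul_inverse_cancel _ ha
  rw [← cancel, sub_mul, ← Algebra.smul_def, sub_sub_cancel]

theorem mul_resolvent_sub_mul_resolvent (ha : z ∈ resolventSet 𝕜 a)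
    (hb : z ∈ resolventSet 𝕜 b) :
    a * resolvent a z - b * resolvent b z = z • (resolvent a z * (a - b) * resolvent b z) := by
  rw [mul_resolvent_eq_smul_sub_one ha, mul_resolvent_eq_smul_sub_one hb, sub_sub_sub_cancel_right,
    ← smul_sub, spectrum.resolvent_sub_resolvent ha hb]

end Algebra

theorem norm_mul_resolvent_sub_mul_resolvent_le {𝕜 R : Type*} [NormedField 𝕜] [NormedRing R]
    [NormedAlgebra 𝕜 R] {a b : R} {z : 𝕜} (ha : z ∈ resolventSet 𝕜 a)
    (hb : z ∈ resolventSet 𝕜 b) :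
    ‖a * resolvent a z - b * resolvent b z‖ ≤
      ‖z‖ * (‖resolvent a z‖ * ‖a - b‖ * ‖resolvent b z‖) := by
  rw [mul_resolvent_sub_mul_resolvent ha hb, norm_smul]
  gcongr
  exact norm_mul₃_le

theorem continuousOn_resolvent {𝕜 R : Type*} [NontriviallyNormedField 𝕜] [NormedRing R]
    [NormedAlgebra 𝕜 R] [CompleteSpace R] (a : R) :
    ContinuousOn (resolvent a) (resolventSet 𝕜 a) :=
  HasDerivAt.continuousOn fun _ hz => spectrum.hasDerivAt_resolvent_const_left hz

/-- The class `V_s` of elements of a normed algebra whose resolvent set contains `s`, with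
`‖R(t,a)‖ ≤ M / t` for `t ∈ s`. It extends `MemV` to normed algebras over `ℝ` or `ℂ` and to sets `s`
of positive reals other than `(0,b]`. -/
def HasResolventBoundOn (𝕜 : Type*) {R : Type*} [RCLike 𝕜] [NormedRing R] [NormedAlgebra 𝕜 R]
    (s : Set ℝ) (M : ℝ) (a : R) : Prop :=
  ∀ t ∈ s, (t : 𝕜) ∈ resolventSet 𝕜 a ∧ ‖resolvent a (t : 𝕜)‖ ≤ M / t

namespace HasResolventBoundOn

variable {𝕜 R : Type*} [RCLike 𝕜] [NormedRing R] [NormedAlgebra 𝕜 R] {s : Set ℝ}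
  {M Ma Mb : ℝ} {a b : R} {τ : Measure ℝ}

theorem norm_mul_resolvent_sub_le (ha : HasResolventBoundOn 𝕜 s Ma a)
    (hb : HasResolventBoundOn 𝕜 s Mb b) {t : ℝ} (hts : t ∈ s) (ht : 0 < t) :
    ‖a * resolvent a (t : 𝕜) - b * resolvent b (t : 𝕜)‖ ≤ Ma * Mb * ‖a - b‖ * (1 / t) := by
  obtain ⟨hta, hRa⟩ := ha t hts
  obtain ⟨htb, hRb⟩ := hb t hts
  have hMa : 0 ≤ Ma / t := (norm_nonneg _).trans hRa
  calc ‖a * resolvent a (t : 𝕜) - b * resolvent b (t : 𝕜)‖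
      ≤ ‖(t : 𝕜)‖ * (‖resolvent a (t : 𝕜)‖ * ‖a - b‖ * ‖resolvent b (t : 𝕜)‖) :=
        norm_mul_resolvent_sub_mul_resolvent_le hta htb
    _ ≤ t * (Ma / t * ‖a - b‖ * (Mb / t)) := by
        rw [RCLike.norm_of_nonneg ht.le]
        gcongr
    _ = Ma * Mb * ‖a - b‖ * (1 / t) := by field_simp

variable [CompleteSpace R]

theorem integrableOn_resolvent (ha : HasResolventBoundOn 𝕜 s M a) (hs : MeasurableSet s)
    (hτ : IntegrableOn (fun t : ℝ => 1 / t) s τ) :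
    IntegrableOn (fun t : ℝ => resolvent a (t : 𝕜)) s τ := by
  have continuousOn_s : ContinuousOn (fun t : ℝ => resolvent a (t : 𝕜)) s :=
    (continuousOn_resolvent a).comp RCLike.continuous_ofReal.continuousOn fun t ht => (ha t ht).1
  refine Integrable.mono' (hτ.const_mul M) (continuousOn_s.aestronglyMeasurable hs)
    (ae_restrict_of_forall_mem hs fun t ht => ?_)
  simpa only [mul_one_div] using (ha t ht).2

theorem integrableOn_mul_resolvent (ha : HasResolventBoundOn 𝕜 s M a) (hs : MeasurableSet s)
    (hτ : IntegrableOn (fun t : ℝ => 1 / t) s τ) :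
    IntegrableOn (fun t : ℝ => a * resolvent a (t : 𝕜)) s τ :=
  (ha.integrableOn_resolvent hs hτ).const_mul a

end HasResolventBoundOn

theorem fOp_lipschitz_general {𝕜 R : Type*} [RCLike 𝕜] [NormedRing R] [NormedAlgebra 𝕜 R]
    [NormedSpace ℝ R] [CompleteSpace R] {s : Set ℝ} (hs : MeasurableSet s) (hs_pos : s ⊆ Ioi 0)
    {τ : Measure ℝ} (hτ : IntegrableOn (fun t : ℝ => 1 / t) s τ) {Ma Mb : ℝ} {a b : R}
    (ha : HasResolventBoundOn 𝕜 s Ma a) (hb : HasResolventBoundOn 𝕜 s Mb b) :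
    ‖(∫ t in s, a * resolvent a (t : 𝕜) ∂τ) - ∫ t in s, b * resolvent b (t : 𝕜) ∂τ‖ ≤
      Ma * Mb * (∫ t in s, 1 / t ∂τ) * ‖a - b‖ := by
  rw [← integral_sub (ha.integrableOn_mul_resolvent hs hτ) (hb.integrableOn_mul_resolvent hs hτ)]
  calc ‖∫ t in s, (a * resolvent a (t : 𝕜) - b * resolvent b (t : 𝕜)) ∂τ‖
      ≤ ∫ t in s, Ma * Mb * ‖a - b‖ * (1 / t) ∂τ :=
        norm_integral_le_of_norm_le (hτ.const_mul _) <| ae_restrict_of_forall_mem hs fun _ ht =>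
          ha.norm_mul_resolvent_sub_le hb ht (hs_pos ht)
    _ = Ma * Mb * (∫ t in s, 1 / t ∂τ) * ‖a - b‖ := by
        rw [integral_const_mul, mul_right_comm]

/-- Theorem 3 (operator Lipschitzness, operator-norm case): for `A, B ∈ V_{(0,b]}(X)`,
`‖f(A) − f(B)‖ ≤ M_A·M_B·f′(−0)·‖A − B‖`, where `f′(−0) = ∫₀^b (1/t) dτ(t)`. -/
theorem fOp_lipschitz {X : Type*} [NormedAddCommGroup X] [NormedSpace ℂ X]
    [CompleteSpace X] (b : ℝ) (hb : 0 < b) (τ : Measure ℝ) [IsFiniteMeasure τ]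
    (hτ : IntegrableOn (fun t : ℝ => 1 / t) (Ioc 0 b) τ)
    (MA MB : ℝ) (hMA : 0 < MA) (hMB : 0 < MB)
    (A B : X →L[ℂ] X) (hA : MemV b MA A) (hB : MemV b MB B) :
    ‖fOp τ b A - fOp τ b B‖ ≤ MA * MB * (∫ t in Ioc (0 : ℝ) b, 1 / t ∂τ) * ‖A - B‖ :=
  fOp_lipschitz_general measurableSet_Ioc (fun _ ht => ht.1) hτ hA hB
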